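/- arXiv:math/0111260 — 4 statements merged into one kernel-verified Lean document; each statement's English description precedes it below -/
import Mathlib

section
/- Let W be a ℂ-linear subspace of the field ℂ((t)) of formal Laurent series such that the projection γ_W : W → ℂ((t))/tℂ[[t]] is Fredholm (has finite-dimensional kernel and cokernel). Let f ∈ ℂ((t)) be a nonzero Laurent series of t-adic order v ∈ ℤ. Then the subspace f·W = {f·w : w ∈ W} also has Fredholm projection γ_{f·W}, and ind(γ_{f·W}) = ind(γ_W) + v. In particular, multiplication by t^{-n} lowers the virtual dimension by n. -/
noncomputable section

/-- Shortcut instance to speed up instance search for submodules of `ℂ((t))`. -/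
instance (W : Submodule ℂ (LaurentSeries ℂ)) : AddCommGroup W := inferInstance

/-- Shortcut instance to speed up instance search for submodules of `ℂ((t))`. -/
instance (W : Submodule ℂ (LaurentSeries ℂ)) : Module ℂ W := inferInstance

/-- The ℂ-subspace `t·ℂ[[t]]` of the field `ℂ((t))` of formal Laurent series:
the series whose coefficients vanish in all degrees `≤ 0`. -/
def tPosPart : Submodule ℂ (LaurentSeries ℂ) where
  carrier := {f | ∀ m : ℤ, m ≤ 0 → f.coeff m = 0}
  add_mem' := by
    intro a b ha hb m hm
    simp [HahnSeries.coeff_add, ha m hm, hb m hm]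
  zero_mem' := by intro m hm; simp
  smul_mem' := by
    intro c a ha m hm
    simp [HahnSeries.coeff_smul, ha m hm]

/-- Shortcut instance to speed up instance search for `ℂ((t))/tℂ[[t]]`. -/
instance : AddCommGroup (LaurentSeries ℂ ⧸ tPosPart) := inferInstance

/-- Shortcut instance to speed up instance search for `ℂ((t))/tℂ[[t]]`. -/
instance : Module ℂ (LaurentSeries ℂ ⧸ tPosPart) := inferInstance

/-- The projection `γ_W : W → ℂ((t))/tℂ[[t]]`, the composite of the inclusion of `W`
into `ℂ((t))` with the quotient map. -/
def gammaMap (W : Submodule ℂ (LaurentSeries ℂ)) :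
    W →ₗ[ℂ] (LaurentSeries ℂ ⧸ tPosPart) :=
  tPosPart.mkQ.comp W.subtype

/-- `γ_W` is Fredholm: its kernel and cokernel are finite-dimensional over `ℂ`. -/
def IsFredholm (W : Submodule ℂ (LaurentSeries ℂ)) : Prop :=
  FiniteDimensional ℂ (LinearMap.ker (gammaMap W)) ∧
  FiniteDimensional ℂ ((LaurentSeries ℂ ⧸ tPosPart) ⧸ LinearMap.range (gammaMap W))

/-- The index `ind γ_W = dim ker γ_W - dim coker γ_W`, i.e. the virtual dimension of `W`. -/
def ind (W : Submodule ℂ (LaurentSeries ℂ)) : ℤ :=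
  (Module.finrank ℂ (LinearMap.ker (gammaMap W)) : ℤ) -
  (Module.finrank ℂ ((LaurentSeries ℂ ⧸ tPosPart) ⧸ LinearMap.range (gammaMap W)) : ℤ)

/-- Multiplication by the Laurent series `f`, as a ℂ-linear endomorphism of `ℂ((t))`. -/
def mulBy (f : LaurentSeries ℂ) : LaurentSeries ℂ →ₗ[ℂ] LaurentSeries ℂ where
  toFun g := f * g
  map_add' := mul_add f
  map_smul' c g := by
    simp only [RingHom.id_apply, ← HahnSeries.single_zero_mul_eq_smul]
    ring

/-- The Laurent series `t^{-n}`. -/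
def tpowNeg (n : ℕ) : LaurentSeries ℂ := HahnSeries.single (-(n : ℤ)) (1 : ℂ)


/-- `W` and `U` form a Fredholm pair of index `n`. -/
def FredPair {V : Type*} [AddCommGroup V] [Module ℂ V] (W U : Submodule ℂ V) (n : ℤ) : Prop :=
  FiniteDimensional ℂ ↥(W ⊓ U) ∧ FiniteDimensional ℂ (V ⧸ (U ⊔ W)) ∧
    (Module.finrank ℂ ↥(W ⊓ U) : ℤ) - (Module.finrank ℂ (V ⧸ (U ⊔ W)) : ℤ) = n

section Abstract

variable {V : Type*} [AddCommGroup V] [Module ℂ V]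

theorem fin_sup_span (A : Submodule ℂ V) (x : V) (hx : x ∉ A) :
    (FiniteDimensional ℂ ↥(A ⊔ Submodule.span ℂ {x}) ↔ FiniteDimensional ℂ A) ∧
    (FiniteDimensional ℂ A → Module.finrank ℂ ↥(A ⊔ Submodule.span ℂ {x}) =
      Module.finrank ℂ A + 1) := by
  have hx0 : x ≠ 0 := fun h => hx (h ▸ A.zero_mem)
  refine ⟨⟨fun h => Submodule.finiteDimensional_of_le (le_sup_left : A ≤ A ⊔ Submodule.span ℂ {x}),
    fun h => inferInstance⟩, fun h => ?_⟩
  have h1 := Submodule.finrank_sup_add_finrank_inf_eq A (Submodule.span ℂ {x})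
  have h2 : A ⊓ Submodule.span ℂ {x} = ⊥ := by
    rw [← disjoint_iff, Submodule.disjoint_span_singleton' hx0]
    exact hx
  rw [h2, finrank_span_singleton hx0, finrank_bot] at h1
  omega

theorem fin_quot_span (A : Submodule ℂ V) (x : V) (hx : x ∉ A) :
    (FiniteDimensional ℂ (V ⧸ (A ⊔ Submodule.span ℂ {x})) ↔ FiniteDimensional ℂ (V ⧸ A)) ∧
    (FiniteDimensional ℂ (V ⧸ A) → Module.finrank ℂ (V ⧸ (A ⊔ Submodule.span ℂ {x})) + 1 =
      Module.finrank ℂ (V ⧸ A)) := by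
  have e := Submodule.quotientQuotientEquivQuotientSup A (Submodule.span ℂ {x})
  have hm : (Submodule.span ℂ {x}).map A.mkQ = Submodule.span ℂ {A.mkQ x} := by
    rw [Submodule.map_span, Set.image_singleton]
  rw [hm] at e
  have hx0 : A.mkQ x ≠ 0 := by
    simpa using hx
  refine ⟨⟨fun h => ?_, fun h => ?_⟩, fun h => ?_⟩
  · have : FiniteDimensional ℂ ((V ⧸ A) ⧸ Submodule.span ℂ {A.mkQ x}) :=
      Module.Finite.equiv e.symm
    exact Module.Finite.of_submodule_quotient (Submodule.span ℂ {A.mkQ x})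
  · exact Module.Finite.equiv e
  · have h1 := Submodule.finrank_quotient_add_finrank (Submodule.span ℂ {A.mkQ x})
    rw [finrank_span_singleton hx0, e.finrank_eq] at h1
    exact h1

theorem fredPair_step (W U U' : Submodule ℂ V) (φ : V →ₗ[ℂ] ℂ)
    (hU : ∀ y, y ∈ U' ↔ y ∈ U ∧ φ y = 0) (x : V) (hxU : x ∈ U) (hx : φ x ≠ 0) (n : ℤ) :
    FredPair W U (n + 1) ↔ FredPair W U' n := by
  have key : ∀ z ∈ U, φ z ≠ 0 → ∀ y ∈ U, y - (φ y / φ z) • z ∈ U' := by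
    intro z hz hz0 y hy
    rw [hU]
    refine ⟨U.sub_mem hy (U.smul_mem _ hz), ?_⟩
    simp [hz0]
  have hle : U' ≤ U := fun y hy => ((hU y).1 hy).1
  unfold FredPair
  by_cases hc : ∃ w ∈ W ⊓ U, φ w ≠ 0
  · obtain ⟨w, ⟨hwW, hwU⟩, hw⟩ := hc
    have h1 : U ⊔ W = U' ⊔ W := by
      apply le_antisymm
      · refine sup_le ?_ le_sup_right
        intro y hy
        rw [← sub_add_cancel y ((φ y / φ w) • w)]
        exact Submodule.add_mem_sup (key w hwU hw y hy) (W.smul_mem _ hwW)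
      · exact sup_le_sup_right hle W
    have h2 : W ⊓ U = (W ⊓ U') ⊔ Submodule.span ℂ {w} := by
      apply le_antisymm
      · rintro y ⟨hyW, hyU⟩
        rw [← sub_add_cancel y ((φ y / φ w) • w)]
        exact Submodule.add_mem_sup ⟨W.sub_mem hyW (W.smul_mem _ hwW), key w hwU hw y hyU⟩
          (Submodule.smul_mem _ _ (Submodule.mem_span_singleton_self w))
      · refine sup_le (inf_le_inf_left W hle) ?_
        rw [Submodule.span_singleton_le_iff_mem]
        exact ⟨hwW, hwU⟩
    have h3 : w ∉ W ⊓ U' := fun h => hw ((hU w).1 h.2).2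
    obtain ⟨h4, h5⟩ := fin_sup_span _ w h3
    rw [h1, h2, h4]
    refine and_congr_right fun h => and_congr_right fun _ => ?_
    rw [h5 h]
    push_cast
    constructor <;> intro <;> linarith
  · push Not at hc
    have h1 : W ⊓ U = W ⊓ U' := by
      apply le_antisymm
      · intro y hy
        exact ⟨hy.1, (hU y).2 ⟨hy.2, hc y hy⟩⟩
      · exact inf_le_inf_left W hle
    have h2 : U ⊔ W = (U' ⊔ W) ⊔ Submodule.span ℂ {x} := by
      apply le_antisymm
      · refine sup_le ?_ (le_sup_right.trans le_sup_left)
        intro y hy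
        rw [← sub_add_cancel y ((φ y / φ x) • x)]
        exact Submodule.add_mem_sup (Submodule.mem_sup_left (key x hxU hx y hy))
          (Submodule.smul_mem _ _ (Submodule.mem_span_singleton_self x))
      · refine sup_le (sup_le_sup_right hle W) ?_
        rw [Submodule.span_singleton_le_iff_mem]
        exact Submodule.mem_sup_left hxU
    have h3 : x ∉ U' ⊔ W := by
      intro h
      obtain ⟨u, hu, w, hw, rfl⟩ := Submodule.mem_sup.1 h
      have hwU : w ∈ U := by
        have := U.sub_mem hxU (hle hu)
        simpa using this
      apply hx
      rw [map_add, ((hU u).1 hu).2, hc w ⟨hw, hwU⟩, add_zero]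
    obtain ⟨h4, h5⟩ := fin_quot_span _ x h3
    rw [h1, h2, h4]
    refine and_congr_right fun _ => and_congr_right fun h => ?_
    rw [← h5 h]
    push_cast
    constructor <;> intro <;> linarith

theorem fredPair_map (e : V ≃ₗ[ℂ] V) (W U : Submodule ℂ V) (n : ℤ) (h : FredPair W U n) :
    FredPair (W.map (e : V →ₗ[ℂ] V)) (U.map (e : V →ₗ[ℂ] V)) n := by
  obtain ⟨h1, h2, h3⟩ := h
  have hi : (W ⊓ U).map (e : V →ₗ[ℂ] V) = W.map (e : V →ₗ[ℂ] V) ⊓ U.map (e : V →ₗ[ℂ] V) :=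
    Submodule.map_inf _ e.injective
  have hs : (U ⊔ W).map (e : V →ₗ[ℂ] V) = U.map (e : V →ₗ[ℂ] V) ⊔ W.map (e : V →ₗ[ℂ] V) :=
    Submodule.map_sup _ _ _
  have e1 := e.submoduleMap (W ⊓ U)
  have e2 := Submodule.Quotient.equiv (U ⊔ W) _ e hs
  rw [hi] at e1
  refine ⟨Module.Finite.equiv e1, Module.Finite.equiv e2, ?_⟩
  rw [← e1.finrank_eq, ← e2.finrank_eq]
  exact h3

end Abstract

/-- Series with vanishing coefficients in degrees `≤ k`. -/
def filt (k : ℤ) : Submodule ℂ (LaurentSeries ℂ) where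
  carrier := {f | ∀ m : ℤ, m ≤ k → f.coeff m = 0}
  add_mem' := by
    intro a b ha hb m hm
    simp [HahnSeries.coeff_add, ha m hm, hb m hm]
  zero_mem' := by intro m hm; simp
  smul_mem' := by
    intro c a ha m hm
    simp [HahnSeries.coeff_smul, ha m hm]

theorem filt_zero : filt 0 = tPosPart := rfl

theorem mem_filt (k : ℤ) (g : LaurentSeries ℂ) (hg : g ≠ 0) : g ∈ filt k ↔ k < g.order := by
  constructor
  · intro h
    by_contra hk
    exact hg (HahnSeries.coeff_order_eq_zero.1 (h _ (not_lt.1 hk)))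
  · intro h m hm
    exact HahnSeries.coeff_eq_zero_of_lt_order (lt_of_le_of_lt hm h)

/-- The coefficient functional. -/
def coeffFun (k : ℤ) : LaurentSeries ℂ →ₗ[ℂ] ℂ where
  toFun g := g.coeff k
  map_add' a b := HahnSeries.coeff_add
  map_smul' c a := by simp

theorem fredPair_filt_step (W : Submodule ℂ (LaurentSeries ℂ)) (k n : ℤ) :
    FredPair W (filt k) (n + 1) ↔ FredPair W (filt (k + 1)) n := by
  refine fredPair_step W _ _ (coeffFun (k + 1)) ?_ (HahnSeries.single (k + 1) (1 : ℂ)) ?_ ?_ n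
  · intro y
    constructor
    · intro h
      exact ⟨fun m hm => h m (by omega), h (k + 1) le_rfl⟩
    · rintro ⟨h1, h2⟩ m hm
      rcases hm.lt_or_eq with h | h
      · exact h1 m (by omega)
      · rw [h]; exact h2
  · intro m hm
    exact HahnSeries.coeff_single_of_ne (by omega)
  · change (HahnSeries.single (k + 1) (1 : ℂ)).coeff (k + 1) ≠ 0
    simp

theorem fredPair_filt (W : Submodule ℂ (LaurentSeries ℂ)) (n : ℤ)
    (h : FredPair W (filt 0) n) (k : ℤ) : FredPair W (filt k) (n - k) := by
  induction k using Int.induction_on with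
  | zero => simpa using h
  | succ i ih =>
    rw [← fredPair_filt_step]
    convert ih using 1
    ring
  | pred i ih =>
    have := fredPair_filt_step W (-(i : ℤ) - 1) (n - -(i : ℤ))
    rw [sub_add_cancel] at this
    convert this.2 ih using 1
    ring

theorem fredPair_iff (W : Submodule ℂ (LaurentSeries ℂ)) (n : ℤ) :
    FredPair W (filt 0) n ↔ IsFredholm W ∧ ind W = n := by
  rw [filt_zero]
  have hk : (LinearMap.ker (gammaMap W)).map W.subtype = W ⊓ tPosPart := by
    rw [gammaMap, LinearMap.ker_comp, Submodule.ker_mkQ, Submodule.map_comap_subtype]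
  have hr : LinearMap.range (gammaMap W) = W.map tPosPart.mkQ := by
    rw [gammaMap, LinearMap.range_comp, Submodule.range_subtype]
  have e1 : LinearMap.ker (gammaMap W) ≃ₗ[ℂ] ↥(W ⊓ tPosPart) :=
    (Submodule.equivMapOfInjective W.subtype W.subtype_injective _).trans
      (LinearEquiv.ofEq _ _ hk)
  have e2 : ((LaurentSeries ℂ ⧸ tPosPart) ⧸ LinearMap.range (gammaMap W)) ≃ₗ[ℂ]
      (LaurentSeries ℂ ⧸ (tPosPart ⊔ W)) :=
    (Submodule.quotEquivOfEq _ _ hr).trans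
      (Submodule.quotientQuotientEquivQuotientSup tPosPart W)
  unfold FredPair IsFredholm ind
  rw [e1.finrank_eq, e2.finrank_eq, and_assoc]
  exact and_congr ⟨fun h => Module.Finite.equiv e1.symm, fun h => Module.Finite.equiv e1⟩
    (and_congr ⟨fun h => Module.Finite.equiv e2.symm, fun h => Module.Finite.equiv e2⟩ Iff.rfl)

/-- Multiplication by a nonzero series as an equivalence. -/
def mulEquiv (f : LaurentSeries ℂ) (hf : f ≠ 0) : LaurentSeries ℂ ≃ₗ[ℂ] LaurentSeries ℂ :=
  LinearEquiv.ofLinear (mulBy f) (mulBy f⁻¹)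
    (LinearMap.ext fun g => mul_inv_cancel_left₀ hf g)
    (LinearMap.ext fun g => inv_mul_cancel_left₀ hf g)

theorem map_filt (f : LaurentSeries ℂ) (hf : f ≠ 0) :
    (filt (-f.order)).map (mulEquiv f hf : LaurentSeries ℂ →ₗ[ℂ] LaurentSeries ℂ) = filt 0 := by
  have key : ∀ g : LaurentSeries ℂ, g ∈ filt (-f.order) ↔ f * g ∈ filt 0 := by
    intro g
    by_cases hg : g = 0
    · subst hg
      rw [mul_zero]
      exact ⟨fun _ => Submodule.zero_mem _, fun _ => Submodule.zero_mem _⟩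
    · rw [mem_filt _ _ hg, mem_filt _ _ (mul_ne_zero hf hg), HahnSeries.order_mul hf hg]
      omega
  ext y
  constructor
  · rintro ⟨g, hg, rfl⟩
    exact (key g).1 hg
  · intro hy
    refine ⟨f⁻¹ * y, (key _).2 ?_, mul_inv_cancel_left₀ hf y⟩
    rwa [mul_inv_cancel_left₀ hf y]

theorem main_aux (W : Submodule ℂ (LaurentSeries ℂ))
    (hW : IsFredholm W) (f : LaurentSeries ℂ) (hf : f ≠ 0) :
    IsFredholm (W.map (mulBy f)) ∧ ind (W.map (mulBy f)) = ind W + f.order := by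
  have h0 := (fredPair_iff W (ind W)).2 ⟨hW, rfl⟩
  have h1 := fredPair_map (mulEquiv f hf) _ _ _ (fredPair_filt W _ h0 (-f.order))
  rw [map_filt, sub_neg_eq_add] at h1
  exact (fredPair_iff _ _).1 h1

/-- If `γ_W` is Fredholm and `f ≠ 0` is a Laurent series of `t`-adic
order `v`, then `γ_{f·W}` is Fredholm and `ind γ_{f·W} = ind γ_W + v`.
In particular, multiplication by `t^{-n}` lowers the virtual dimension by `n`. -/
theorem mul_by_laurentSeries_shifts_index (W : Submodule ℂ (LaurentSeries ℂ))
    (hW : IsFredholm W) (f : LaurentSeries ℂ) (hf : f ≠ 0) (v : ℤ) (hv : f.order = v) :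
    (IsFredholm (W.map (mulBy f)) ∧ ind (W.map (mulBy f)) = ind W + v) ∧
    ∀ m : ℕ, ind (W.map (mulBy (tpowNeg m))) = ind W - m := by
  refine ⟨?_, fun m => ?_⟩
  · rw [← hv]
    exact main_aux W hW f hf
  · have h1 : tpowNeg m ≠ 0 := by
      unfold tpowNeg
      exact HahnSeries.single_ne_zero one_ne_zero
    rw [(main_aux W hW _ h1).2, tpowNeg, HahnSeries.order_single one_ne_zero, sub_eq_add_neg]

end
end

section
/- Let W ⊆ W' be ℂ-linear subspaces of ℂ((t)) such that both projections γ_W : W → ℂ((t))/tℂ[[t]] and γ_{W'} : W' → ℂ((t))/tℂ[[t]] are Fredholm. Then the quotient space W'/W is finite-dimensional over ℂ and dim_ℂ(W'/W) = ind(γ_{W'}) − ind(γ_W). -/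
noncomputable section

/-- Abstract index computation for the restriction of `f` to a subspace `N`. -/
theorem index_aux {V Q : Type*} [AddCommGroup V] [Module ℂ V] [AddCommGroup Q] [Module ℂ Q]
    (f : V →ₗ[ℂ] Q) (N : Submodule ℂ V)
    (h1 : FiniteDimensional ℂ (LinearMap.ker f)) (h2 : FiniteDimensional ℂ (Q ⧸ N.map f)) :
    FiniteDimensional ℂ (V ⧸ N) ∧
    Module.finrank ℂ (V ⧸ N) + Module.finrank ℂ (LinearMap.ker f ⊓ N : Submodule ℂ V)
      + Module.finrank ℂ (Q ⧸ LinearMap.range f)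
      = Module.finrank ℂ (LinearMap.ker f) + Module.finrank ℂ (Q ⧸ N.map f) := by
  let ψ : (V ⧸ N) →ₗ[ℂ] (Q ⧸ N.map f) := N.mapQ (N.map f) f (Submodule.le_comap_map f N)
  let φ : LinearMap.ker f →ₗ[ℂ] (V ⧸ N) := N.mkQ.comp (LinearMap.ker f).subtype
  have hker : LinearMap.ker ψ = LinearMap.range φ := by
    ext x
    obtain ⟨v, rfl⟩ := N.mkQ_surjective x
    constructor
    · intro hx
      have hx' : f v ∈ N.map f := by
        simpa [ψ, Submodule.Quotient.mk_eq_zero] using hx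
      obtain ⟨n, hn, hnv⟩ := hx'
      refine ⟨⟨v - n, by simp [hnv]⟩, ?_⟩
      simp only [φ, LinearMap.comp_apply, Submodule.subtype_apply, map_sub]
      have : N.mkQ n = 0 := by simpa using hn
      rw [this, sub_zero]
    · rintro ⟨⟨k, hk⟩, hkv⟩
      rw [← hkv]
      have hk' : f k = 0 := hk
      simp [φ, ψ, hk']
  have fk : FiniteDimensional ℂ (LinearMap.ker ψ) := by
    rw [hker]; infer_instance
  have fA : FiniteDimensional ℂ (V ⧸ N) := by
    have : FiniteDimensional ℂ ((V ⧸ N) ⧸ LinearMap.ker ψ) :=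
      Module.Finite.equiv ψ.quotKerEquivRange.symm
    exact Module.Finite.of_submodule_quotient (LinearMap.ker ψ)
  refine ⟨fA, ?_⟩
  have e1 := LinearMap.finrank_range_add_finrank_ker ψ
  have e2 := LinearMap.finrank_range_add_finrank_ker φ
  have e3 := Submodule.finrank_quotient_add_finrank (LinearMap.range ψ)
  have hr : LinearMap.range ψ = (LinearMap.range f).map (N.map f).mkQ := by
    ext y
    constructor
    · rintro ⟨x, rfl⟩
      obtain ⟨v, rfl⟩ := N.mkQ_surjective x
      exact ⟨f v, ⟨v, rfl⟩, rfl⟩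
    · rintro ⟨_, ⟨v, rfl⟩, rfl⟩
      exact ⟨N.mkQ v, rfl⟩
  have e4 : Module.finrank ℂ ((Q ⧸ N.map f) ⧸ LinearMap.range ψ)
      = Module.finrank ℂ (Q ⧸ LinearMap.range f) := by
    rw [hr]
    exact (Submodule.quotientQuotientEquivQuotient (N.map f) (LinearMap.range f)
      (LinearMap.map_le_range)).finrank_eq
  have e5 : Module.finrank ℂ (LinearMap.ker φ)
      = Module.finrank ℂ (LinearMap.ker f ⊓ N : Submodule ℂ V) := by
    have : LinearMap.ker φ = N.comap (LinearMap.ker f).subtype := by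
      simp [φ, LinearMap.ker_comp]
    rw [this, ← Submodule.map_comap_subtype, Submodule.finrank_map_subtype_eq]
  rw [hker] at e1
  omega

/-- If `W ⊆ W'` and both `γ_W` and `γ_{W'}` are Fredholm, then `W'/W`
is finite-dimensional of dimension `ind γ_{W'} - ind γ_W`. -/
theorem finrank_quotient_eq_ind_sub_ind (W W' : Submodule ℂ (LaurentSeries ℂ))
    (hle : W ≤ W') (hW : IsFredholm W) (hW' : IsFredholm W') :
    FiniteDimensional ℂ (W' ⧸ W.comap W'.subtype) ∧
    (Module.finrank ℂ (W' ⧸ W.comap W'.subtype) : ℤ) = ind W' - ind W := by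
  have hm : (W.comap W'.subtype).map (gammaMap W') = LinearMap.range (gammaMap W) := by
    ext y
    constructor
    · rintro ⟨⟨v, hv'⟩, hv, rfl⟩
      exact ⟨⟨v, hv⟩, rfl⟩
    · rintro ⟨⟨v, hv⟩, rfl⟩
      exact ⟨⟨v, hle hv⟩, hv, rfl⟩
  have hk : Module.finrank ℂ
      (LinearMap.ker (gammaMap W') ⊓ W.comap W'.subtype : Submodule ℂ W')
      = Module.finrank ℂ (LinearMap.ker (gammaMap W)) := by
    rw [← Submodule.finrank_map_subtype_eq W', ← Submodule.finrank_map_subtype_eq W]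
    suffices h : Submodule.map W'.subtype (LinearMap.ker (gammaMap W') ⊓ W.comap W'.subtype)
        = Submodule.map W.subtype (LinearMap.ker (gammaMap W)) by rw [h]
    ext v
    constructor
    · rintro ⟨⟨v, hv'⟩, ⟨hv1, hv2⟩, rfl⟩
      exact ⟨⟨v, hv2⟩, hv1, rfl⟩
    · rintro ⟨⟨v, hv⟩, hv1, rfl⟩
      exact ⟨⟨v, hle hv⟩, ⟨hv1, hv⟩, rfl⟩
  have h2 : FiniteDimensional ℂ
      ((LaurentSeries ℂ ⧸ tPosPart) ⧸ (W.comap W'.subtype).map (gammaMap W')) := by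
    rw [hm]; exact hW.2
  obtain ⟨hf, he⟩ := index_aux (gammaMap W') (W.comap W'.subtype) hW'.1 h2
  refine ⟨hf, ?_⟩
  rw [hm, hk] at he
  unfold ind
  omega

end
end

section
/- Let n ≥ 1 and let W be a ℂ-linear subspace of ℂ((t)) such that γ_W : W → ℂ((t))/tℂ[[t]] is Fredholm and t^{-n}·W ⊆ W (i.e., W is a point of the n-reduced Sato Grassmannian GR^{(n)}). Then the quotient W/(t^{-n}·W) is a ℂ-vector space of dimension exactly n. -/
noncomputable section

theorem coeff_tpow_mul (n : ℕ) (f : LaurentSeries ℂ) (m : ℤ) :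
    ((HahnSeries.single (n : ℤ) (1 : ℂ) : LaurentSeries ℂ) * f).coeff m = f.coeff (m - n) := by
  rw [HahnSeries.coeff_single_mul, one_mul]

theorem tpow_mul_tpowNeg (n : ℕ) (f : LaurentSeries ℂ) :
    (HahnSeries.single (n : ℤ) (1 : ℂ) : LaurentSeries ℂ) * (tpowNeg n * f) = f := by
  rw [tpowNeg, ← mul_assoc, HahnSeries.single_mul_single]
  simp

/-- Multiplication by `t^n` on `ℂ((t))/tℂ[[t]]`. -/
def shiftQ (n : ℕ) : (LaurentSeries ℂ ⧸ tPosPart) →ₗ[ℂ] (LaurentSeries ℂ ⧸ tPosPart) :=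
  tPosPart.mapQ tPosPart (mulBy (HahnSeries.single (n : ℤ) (1 : ℂ))) (by
    intro f hf m hm
    change ((HahnSeries.single (n : ℤ) (1 : ℂ) : LaurentSeries ℂ) * f).coeff m = 0
    rw [coeff_tpow_mul]
    exact hf _ (by omega))

theorem shiftQ_mk (n : ℕ) (f : LaurentSeries ℂ) :
    shiftQ n (tPosPart.mkQ f) = tPosPart.mkQ (HahnSeries.single (n : ℤ) (1 : ℂ) * f) := rfl

theorem shiftQ_surjective (n : ℕ) : Function.Surjective (shiftQ n) := by
  intro x
  obtain ⟨f, rfl⟩ := tPosPart.mkQ_surjective x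
  exact ⟨tPosPart.mkQ (tpowNeg n * f), by rw [shiftQ_mk, tpow_mul_tpowNeg]⟩

/-- The coefficients in degrees `0, -1, …, -(n-1)`. -/
def coeffsL (n : ℕ) : LaurentSeries ℂ →ₗ[ℂ] (Fin n → ℂ) where
  toFun f i := f.coeff (-(i : ℤ))
  map_add' f g := by ext i; simp
  map_smul' c f := by ext i; simp

/-- The coefficients in degrees `0, -1, …, -(n-1)`, modulo `tℂ[[t]]`. -/
def coeffsQ (n : ℕ) : (LaurentSeries ℂ ⧸ tPosPart) →ₗ[ℂ] (Fin n → ℂ) :=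
  tPosPart.liftQ (coeffsL n) (by
    intro f hf
    rw [LinearMap.mem_ker]
    ext i
    exact hf _ (by omega))

theorem coeffsQ_mk (n : ℕ) (f : LaurentSeries ℂ) (i : Fin n) :
    coeffsQ n (tPosPart.mkQ f) i = f.coeff (-(i : ℤ)) := rfl

theorem shiftQ_mk_eq_zero (n : ℕ) (f : LaurentSeries ℂ) :
    shiftQ n (tPosPart.mkQ f) = 0 ↔ ∀ m : ℤ, m ≤ -n → f.coeff m = 0 := by
  rw [shiftQ_mk, Submodule.mkQ_apply, Submodule.Quotient.mk_eq_zero]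
  constructor
  · intro h m hm
    have := h (m + n) (by omega)
    rwa [coeff_tpow_mul, add_sub_cancel_right] at this
  · intro h m hm
    rw [coeff_tpow_mul]
    exact h _ (by omega)

theorem coeffsQ_bijective (n : ℕ) :
    Function.Bijective ((coeffsQ n).comp (LinearMap.ker (shiftQ n)).subtype) := by
  constructor
  · rw [← LinearMap.ker_eq_bot, LinearMap.ker_eq_bot']
    rintro ⟨x, hx⟩ h
    obtain ⟨f, rfl⟩ := tPosPart.mkQ_surjective x
    rw [LinearMap.mem_ker, shiftQ_mk_eq_zero] at hx
    apply Subtype.ext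
    change tPosPart.mkQ f = 0
    rw [Submodule.mkQ_apply, Submodule.Quotient.mk_eq_zero]
    intro m hm
    by_cases hmn : m ≤ -n
    · exact hx m hmn
    · have h2 := congrFun h ⟨(-m).toNat, by omega⟩
      change f.coeff (-(((-m).toNat : ℕ) : ℤ)) = 0 at h2
      rwa [show -(((-m).toNat : ℕ) : ℤ) = m by omega] at h2
  · intro v
    let f : LaurentSeries ℂ := ∑ i : Fin n, HahnSeries.single (-(i : ℤ)) (v i)
    have hf : ∀ m, f.coeff m = ∑ i : Fin n, if m = -(i : ℤ) then v i else 0 := by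
      intro m
      rw [HahnSeries.coeff_sum]
      refine Finset.sum_congr rfl fun i _ => ?_
      rw [HahnSeries.coeff_single]
      congr
    refine ⟨⟨tPosPart.mkQ f, ?_⟩, ?_⟩
    · rw [LinearMap.mem_ker, shiftQ_mk_eq_zero]
      intro m hm
      rw [hf]
      refine Finset.sum_eq_zero fun i _ => if_neg ?_
      have := i.2
      omega
    · ext j
      change f.coeff (-(j : ℤ)) = v j
      rw [hf, Finset.sum_eq_single j]
      · simp
      · intro i _ hij
        refine if_neg fun h => hij (Fin.ext ?_)
        omega
      · simp

theorem finite_ker_shiftQ (n : ℕ) : FiniteDimensional ℂ (LinearMap.ker (shiftQ n)) :=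
  Module.Finite.equiv (LinearEquiv.ofBijective _ (coeffsQ_bijective n)).symm

theorem index_shiftQ (n : ℕ) : (shiftQ n).index = n := by
  rw [LinearMap.index_of_surjective (shiftQ_surjective n),
    (LinearEquiv.ofBijective _ (coeffsQ_bijective n)).finrank_eq]
  simp

section Abstract

variable {V V' : Type*} [AddCommGroup V] [Module ℂ V] [AddCommGroup V'] [Module ℂ V']

theorem finite_coker_of_comp (f : V →ₗ[ℂ] V) (g h : V →ₗ[ℂ] V') (hgf : g ∘ₗ f = h)
    [FiniteDimensional ℂ (LinearMap.ker g)]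
    [FiniteDimensional ℂ (V' ⧸ LinearMap.range h)] :
    FiniteDimensional ℂ (V ⧸ LinearMap.range f) := by
  have aux : LinearMap.range f ≤ (LinearMap.range h).comap g := by
    rintro _ ⟨x, rfl⟩
    exact ⟨x, by rw [← hgf]; rfl⟩
  let f₂ : LinearMap.ker g →ₗ[ℂ] V ⧸ LinearMap.range f :=
    (LinearMap.range f).mkQ ∘ₗ (LinearMap.ker g).subtype
  let f₃ : (V ⧸ LinearMap.range f) →ₗ[ℂ] V' ⧸ LinearMap.range h :=
    (LinearMap.range f).mapQ (LinearMap.range h) g aux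
  have h3 : Function.Exact f₂ f₃ := by
    intro y
    obtain ⟨y, rfl⟩ := (LinearMap.range f).mkQ_surjective y
    constructor
    · intro hy
      change (LinearMap.range h).mkQ (g y) = 0 at hy
      rw [Submodule.mkQ_apply, Submodule.Quotient.mk_eq_zero] at hy
      obtain ⟨x, hx⟩ := hy
      refine ⟨⟨y - f x, ?_⟩, ?_⟩
      · rw [LinearMap.mem_ker, map_sub, ← hx, ← hgf]
        simp
      · change (LinearMap.range f).mkQ (y - f x) = _
        rw [map_sub, sub_eq_self, Submodule.mkQ_apply, Submodule.Quotient.mk_eq_zero]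
        exact ⟨x, rfl⟩
    · rintro ⟨⟨x, hx⟩, hxy⟩
      rw [← hxy]
      change (LinearMap.range h).mkQ (g x) = 0
      rw [LinearMap.mem_ker.1 hx, map_zero]
  have : FiniteDimensional ℂ (LinearMap.ker f₃) := by
    rw [LinearMap.exact_iff.1 h3]
    infer_instance
  have : FiniteDimensional ℂ (LinearMap.range f₃) := inferInstance
  have : FiniteDimensional ℂ ((V ⧸ LinearMap.range f) ⧸ LinearMap.ker f₃) :=
    Module.Finite.equiv f₃.quotKerEquivRange.symm
  exact Module.Finite.of_submodule_quotient (LinearMap.ker f₃)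

theorem abstract_index (n : ℕ) (T : V' →ₗ[ℂ] V') (hT : T.index = n)
    (hTs : Function.Surjective T) [FiniteDimensional ℂ (LinearMap.ker T)]
    (g : V →ₗ[ℂ] V') [FiniteDimensional ℂ (LinearMap.ker g)]
    [FiniteDimensional ℂ (V' ⧸ LinearMap.range g)]
    (m : V →ₗ[ℂ] V) (hm : Function.Injective m) (h : (T ∘ₗ g) ∘ₗ m = g) :
    FiniteDimensional ℂ (V ⧸ LinearMap.range m) ∧
      Module.finrank ℂ (V ⧸ LinearMap.range m) = n := by
  have : FiniteDimensional ℂ (LinearMap.ker (T ∘ₗ g)) := by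
    rw [LinearMap.ker_comp]; infer_instance
  have : FiniteDimensional ℂ (V' ⧸ LinearMap.range T) := by
    rw [LinearMap.range_eq_top.2 hTs]; infer_instance
  have : FiniteDimensional ℂ (V' ⧸ LinearMap.range (T ∘ₗ g)) := by
    rw [LinearMap.range_comp]; infer_instance
  have hfin := finite_coker_of_comp m (T ∘ₗ g) g h
  have : FiniteDimensional ℂ (LinearMap.ker m) := by
    rw [LinearMap.ker_eq_bot.2 hm]; infer_instance
  refine ⟨hfin, ?_⟩
  have h1 := LinearMap.index_comp (f := m) (T ∘ₗ g)
  have h2 := LinearMap.index_comp (f := g) T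
  have h3 := LinearMap.index_of_injective hm
  rw [h] at h1
  omega

end Abstract

/-- If `W` is a point of the `n`-reduced Sato Grassmannian `GR⁽ⁿ⁾`
(`γ_W` Fredholm and `t^{-n}·W ⊆ W`, `n ≥ 1`), then `W/(t^{-n}·W)` has dimension `n`. -/
theorem finrank_quotient_tpowNeg_smul (n : ℕ) (hn : 1 ≤ n)
    (W : Submodule ℂ (LaurentSeries ℂ)) (hW : IsFredholm W)
    (hsub : W.map (mulBy (tpowNeg n)) ≤ W) :
    FiniteDimensional ℂ (W ⧸ (W.map (mulBy (tpowNeg n))).comap W.subtype) ∧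
    Module.finrank ℂ (W ⧸ (W.map (mulBy (tpowNeg n))).comap W.subtype) = n := by
  obtain ⟨h1, h2⟩ := hW
  have := finite_ker_shiftQ n
  let m : W →ₗ[ℂ] W := (mulBy (tpowNeg n)).restrict
    (fun x hx => hsub (Submodule.mem_map_of_mem hx))
  have hmv : ∀ w : W, ((m w : W) : LaurentSeries ℂ) = tpowNeg n * w := fun _ => rfl
  have hm : Function.Injective m := by
    intro a b hab
    apply Subtype.ext
    have := congrArg (fun w : W => (w : LaurentSeries ℂ)) hab
    simp only [hmv] at this
    rw [← tpow_mul_tpowNeg n a, this, tpow_mul_tpowNeg]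
  have hcomp : (shiftQ n ∘ₗ gammaMap W) ∘ₗ m = gammaMap W := by
    ext w
    change shiftQ n (tPosPart.mkQ (tpowNeg n * w)) = tPosPart.mkQ w
    rw [shiftQ_mk, tpow_mul_tpowNeg]
  have hr : (W.map (mulBy (tpowNeg n))).comap W.subtype = LinearMap.range m := by
    ext w
    constructor
    · rintro ⟨x, hx, hxw⟩
      exact ⟨⟨x, hx⟩, Subtype.ext hxw⟩
    · rintro ⟨x, rfl⟩
      exact ⟨x, x.2, rfl⟩
  rw [hr]
  exact abstract_index n (shiftQ n) (index_shiftQ n) (shiftQ_surjective n) (gammaMap W) m hm hcomp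

end
end

section
/- Let n ≥ 1 and let W ⊆ ℂ((t)) be a ℂ-subspace with γ_W : W → ℂ((t))/tℂ[[t]] Fredholm of index 0 and t^{-n}·W ⊆ W. Then the assignment (W_0,…,W_n) ↦ (W_1/W_0 ⊆ W_2/W_0 ⊆ ⋯ ⊆ W_n/W_0) is a bijection between the set of chains W_0 ⊆ W_1 ⊆ ⋯ ⊆ W_n of ℂ-subspaces of ℂ((t)) with W_n = W, W_0 = t^{-n}·W, and each γ_{W_i} Fredholm of index i − n, and the set of complete flags 0 = V_0 ⊂ V_1 ⊂ ⋯ ⊂ V_n of the n-dimensional ℂ-vector space W/(t^{-n}·W) with dim_ℂ V_i = i. In other words, the fiber of the natural fibration FL^{(n)} → GR^{(n)} over W is the full flag variety of W/t^{-n}W. -/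
noncomputable section

/-- Extra shortcut instance: quotients of submodules of `ℂ((t))`. -/
instance (W : Submodule ℂ (LaurentSeries ℂ)) (U : Submodule ℂ W) :
    AddCommGroup (W ⧸ U) := inferInstance

/-- Extra shortcut instance: quotients of submodules of `ℂ((t))`. -/
instance (W : Submodule ℂ (LaurentSeries ℂ)) (U : Submodule ℂ W) :
    Module ℂ (W ⧸ U) := inferInstance

section FredholmAbstract

variable {K E Q : Type*} [Field K] [AddCommGroup E] [Module K E] [AddCommGroup Q] [Module K Q]

/-- The map `B/A → Q/φ(A)` induced by `φ`. -/
def relF (φ : E →ₗ[K] Q) (A B : Submodule K E) :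
    (B ⧸ A.comap B.subtype) →ₗ[K] Q ⧸ A.map φ :=
  Submodule.mapQ _ _ (φ.comp B.subtype) (by
    rintro x hx
    exact ⟨x, hx, rfl⟩)

/-- The map `Q/φ(A) → Q/φ(B)`. -/
def relG (φ : E →ₗ[K] Q) {A B : Submodule K E} (h : A ≤ B) :
    (Q ⧸ A.map φ) →ₗ[K] Q ⧸ B.map φ :=
  Submodule.mapQ _ _ LinearMap.id (Submodule.map_mono h)

/-- The map `ker φ|_B → B/A`. -/
def relH (φ : E →ₗ[K] Q) (A B : Submodule K E) :
    LinearMap.ker (φ.comp B.subtype) →ₗ[K] (B ⧸ A.comap B.subtype) :=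
  (A.comap B.subtype).mkQ.comp (Submodule.subtype _)

theorem relG_surj (φ : E →ₗ[K] Q) {A B : Submodule K E} (h : A ≤ B) :
    Function.Surjective (relG φ h) := by
  intro y
  obtain ⟨q, rfl⟩ := Submodule.mkQ_surjective _ y
  exact ⟨Submodule.Quotient.mk q, rfl⟩

theorem relG_ker (φ : E →ₗ[K] Q) {A B : Submodule K E} (h : A ≤ B) :
    LinearMap.ker (relG φ h) = LinearMap.range (relF φ A B) := by
  ext y
  obtain ⟨q, rfl⟩ := Submodule.mkQ_surjective _ y
  constructor
  · intro hy
    have hq : q ∈ B.map φ := (Submodule.Quotient.mk_eq_zero _).1 hy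
    obtain ⟨b, hb, rfl⟩ := hq
    exact ⟨Submodule.Quotient.mk ⟨b, hb⟩, rfl⟩
  · rintro ⟨x, hx⟩
    obtain ⟨b, rfl⟩ := Submodule.mkQ_surjective _ x
    rw [← hx]
    exact (Submodule.Quotient.mk_eq_zero _).2 ⟨b, b.2, rfl⟩

theorem relH_range (φ : E →ₗ[K] Q) {A B : Submodule K E} (h : A ≤ B) :
    LinearMap.range (relH φ A B) = LinearMap.ker (relF φ A B) := by
  ext y
  obtain ⟨b, rfl⟩ := Submodule.mkQ_surjective _ y
  constructor
  · rintro ⟨x, hx⟩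
    rw [← hx]
    have h0 : φ (x : B) = 0 := x.2
    refine (Submodule.Quotient.mk_eq_zero _).2 ?_
    change φ (x : B) ∈ _
    rw [h0]
    exact zero_mem _
  · intro hy
    have hq : φ (b : E) ∈ A.map φ := (Submodule.Quotient.mk_eq_zero _).1 hy
    obtain ⟨a, ha, hab⟩ := hq
    refine ⟨⟨b - ⟨a, h ha⟩, ?_⟩, ?_⟩
    · change φ ((b : E) - a) = 0
      rw [map_sub, hab, sub_self]
    · refine (Submodule.Quotient.eq _).2 ?_
      change ((b : E) - a) - b ∈ A
      simpa using ha

/-- `ker φ|_A` is the kernel of `ker φ|_B → B/A`. -/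
def kerEquiv (φ : E →ₗ[K] Q) {A B : Submodule K E} (h : A ≤ B) :
    LinearMap.ker (φ.comp A.subtype) ≃ₗ[K] LinearMap.ker (relH φ A B) where
  toFun x := ⟨⟨⟨(x : A), h (x : A).2⟩, x.2⟩,
    (Submodule.Quotient.mk_eq_zero _).2 (x : A).2⟩
  invFun y := ⟨⟨((y : LinearMap.ker (φ.comp B.subtype)) : B),
    (Submodule.Quotient.mk_eq_zero (A.comap B.subtype)).1 y.2⟩, y.1.2⟩
  map_add' _ _ := rfl
  map_smul' _ _ := rfl
  left_inv _ := rfl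
  right_inv _ := rfl

theorem fin_quot (φ : E →ₗ[K] Q) {A B : Submodule K E} (h : A ≤ B)
    [FiniteDimensional K (LinearMap.ker (φ.comp B.subtype))]
    [FiniteDimensional K (Q ⧸ A.map φ)] :
    FiniteDimensional K (B ⧸ A.comap B.subtype) := by
  have h1 : FiniteDimensional K (LinearMap.ker (relF φ A B)) := by
    rw [← relH_range φ h]; infer_instance
  have h2 : FiniteDimensional K ((B ⧸ A.comap B.subtype) ⧸ LinearMap.ker (relF φ A B)) :=
    Module.Finite.equiv (relF φ A B).quotKerEquivRange.symm
  exact Module.Finite.of_submodule_quotient (LinearMap.ker (relF φ A B))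

theorem fin_sub (φ : E →ₗ[K] Q) {A B : Submodule K E} (h : A ≤ B)
    [FiniteDimensional K (LinearMap.ker (φ.comp B.subtype))]
    [FiniteDimensional K (Q ⧸ B.map φ)]
    [FiniteDimensional K (B ⧸ A.comap B.subtype)] :
    FiniteDimensional K (LinearMap.ker (φ.comp A.subtype)) ∧
    FiniteDimensional K (Q ⧸ A.map φ) := by
  refine ⟨Module.Finite.equiv (kerEquiv φ h).symm, ?_⟩
  have h1 : FiniteDimensional K (LinearMap.ker (relG φ h)) := by
    rw [relG_ker φ h]; infer_instance
  have h2 : FiniteDimensional K ((Q ⧸ A.map φ) ⧸ LinearMap.ker (relG φ h)) :=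
    Module.Finite.equiv (relG φ h).quotKerEquivRange.symm
  exact Module.Finite.of_submodule_quotient (LinearMap.ker (relG φ h))

theorem index_formula (φ : E →ₗ[K] Q) {A B : Submodule K E} (h : A ≤ B)
    [FiniteDimensional K (LinearMap.ker (φ.comp B.subtype))]
    [FiniteDimensional K (Q ⧸ A.map φ)] :
    Module.finrank K (LinearMap.ker (φ.comp B.subtype)) + Module.finrank K (Q ⧸ A.map φ)
      = Module.finrank K (LinearMap.ker (φ.comp A.subtype)) + Module.finrank K (Q ⧸ B.map φ)
        + Module.finrank K (B ⧸ A.comap B.subtype) := by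
  have := fin_quot φ h
  have e1 := (relH φ A B).finrank_range_add_finrank_ker
  have e2 := (relF φ A B).finrank_range_add_finrank_ker
  have e3 := (relG φ h).finrank_range_add_finrank_ker
  rw [relH_range φ h, ← (kerEquiv φ h).finrank_eq] at e1
  rw [relG_ker, LinearMap.range_eq_top.2 (relG_surj φ h), finrank_top] at e3
  omega

/-- `C/A` is the image of `C` in `W/A`. -/
theorem finrank_image {A C W : Submodule K E} (h2 : C ≤ W) :
    Module.finrank K (Submodule.map (A.comap W.subtype).mkQ (C.comap W.subtype))
      = Module.finrank K (C ⧸ A.comap C.subtype) := by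
  let k : C →ₗ[K] W ⧸ A.comap W.subtype :=
    (A.comap W.subtype).mkQ.comp (Submodule.inclusion h2)
  have hk : LinearMap.ker k = A.comap C.subtype := by
    ext x
    exact Submodule.Quotient.mk_eq_zero (A.comap W.subtype)
  have hr : LinearMap.range k = Submodule.map (A.comap W.subtype).mkQ (C.comap W.subtype) := by
    ext y
    constructor
    · rintro ⟨x, rfl⟩
      exact ⟨⟨x, h2 x.2⟩, x.2, rfl⟩
    · rintro ⟨x, hx, rfl⟩
      exact ⟨⟨x, hx⟩, rfl⟩
  rw [← hk, ← hr]
  exact k.quotKerEquivRange.finrank_eq.symm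

theorem comap_map_image {A C W : Submodule K E} (h1 : A ≤ C) (h2 : C ≤ W) :
    Submodule.map W.subtype (Submodule.comap (A.comap W.subtype).mkQ
      (Submodule.map (A.comap W.subtype).mkQ (C.comap W.subtype))) = C := by
  rw [Submodule.comap_map_mkQ, sup_eq_right.2 (Submodule.comap_mono h1),
    Submodule.map_comap_subtype, inf_eq_right.2 h2]

end FredholmAbstract

theorem range_gammaMap (W : Submodule ℂ (LaurentSeries ℂ)) :
    LinearMap.range (gammaMap W) = W.map tPosPart.mkQ := by
  rw [gammaMap, LinearMap.range_comp, Submodule.range_subtype]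

theorem isFredholm_iff (W : Submodule ℂ (LaurentSeries ℂ)) : IsFredholm W ↔
    FiniteDimensional ℂ (LinearMap.ker (tPosPart.mkQ.comp W.subtype)) ∧
    FiniteDimensional ℂ ((LaurentSeries ℂ ⧸ tPosPart) ⧸ W.map tPosPart.mkQ) := by
  rw [← range_gammaMap]; rfl

theorem ind_eq (W : Submodule ℂ (LaurentSeries ℂ)) : ind W =
    (Module.finrank ℂ (LinearMap.ker (tPosPart.mkQ.comp W.subtype)) : ℤ) -
    (Module.finrank ℂ ((LaurentSeries ℂ ⧸ tPosPart) ⧸ W.map tPosPart.mkQ) : ℤ) := by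
  rw [← range_gammaMap]; rfl

theorem IsFredholm.of_le {A B : Submodule ℂ (LaurentSeries ℂ)} (h : A ≤ B) (hB : IsFredholm B)
    [FiniteDimensional ℂ (B ⧸ A.comap B.subtype)] : IsFredholm A := by
  rw [isFredholm_iff] at hB ⊢
  have := hB.1
  have := hB.2
  exact fin_sub tPosPart.mkQ h

theorem ind_sub {A B : Submodule ℂ (LaurentSeries ℂ)} (h : A ≤ B) (hA : IsFredholm A)
    (hB : IsFredholm B) :
    ind B = ind A + (Module.finrank ℂ (B ⧸ A.comap B.subtype) : ℤ) := by
  rw [isFredholm_iff] at hA hB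
  have := hB.1
  have := hA.2
  have := index_formula tPosPart.mkQ h
  rw [ind_eq, ind_eq]
  omega

/-- For `W ∈ GR⁽ⁿ⁾` with `ind γ_W = 0`, the assignment
`(W_0,…,W_n) ↦ (W_1/W_0 ⊆ ⋯ ⊆ W_n/W_0)` is a bijection from the set of chains
`t^{-n}W = W_0 ⊆ ⋯ ⊆ W_n = W` with each `γ_{W_i}` Fredholm of index `i - n`, onto the
set of complete flags of the `n`-dimensional space `W/(t^{-n}W)`: the fiber of
`FL⁽ⁿ⁾ → GR⁽ⁿ⁾` over `W` is the full flag variety of `W/t^{-n}W`. -/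
theorem affine_flag_fiber_is_full_flag_variety (n : ℕ) (hn : 1 ≤ n)
    (W : Submodule ℂ (LaurentSeries ℂ)) (hW : IsFredholm W) (hind : ind W = 0)
    (hsub : W.map (mulBy (tpowNeg n)) ≤ W) :
    Set.BijOn
      (fun (C : Fin (n + 1) → Submodule ℂ (LaurentSeries ℂ)) (i : Fin (n + 1)) =>
        Submodule.map ((W.map (mulBy (tpowNeg n))).comap W.subtype).mkQ
          ((C i).comap W.subtype))
      {C | C 0 = W.map (mulBy (tpowNeg n)) ∧ C (Fin.last n) = W ∧ Monotone C ∧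
        ∀ i, IsFredholm (C i) ∧ ind (C i) = ((i : ℕ) : ℤ) - (n : ℤ)}
      {V : Fin (n + 1) →
          Submodule ℂ (W ⧸ (W.map (mulBy (tpowNeg n))).comap W.subtype) |
        V 0 = ⊥ ∧ V (Fin.last n) = ⊤ ∧ Monotone V ∧
        ∀ i : Fin (n + 1), Module.finrank ℂ (V i) = i} := by
  generalize W.map (mulBy (tpowNeg n)) = A at hsub ⊢
  refine ⟨?_, ?_, ?_⟩
  · rintro C ⟨h0, hl, hm, hC⟩
    have hAC : ∀ i, A ≤ C i := fun i => h0 ▸ hm (Fin.zero_le i)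
    have hCW : ∀ i, C i ≤ W := fun i => hl ▸ hm (Fin.le_last i)
    refine ⟨?_, ?_, ?_, ?_⟩
    · change Submodule.map _ ((C 0).comap W.subtype) = ⊥
      rw [h0]
      exact Submodule.mkQ_map_self _
    · change Submodule.map _ ((C (Fin.last n)).comap W.subtype) = ⊤
      rw [hl, Submodule.comap_subtype_self, Submodule.map_top, Submodule.range_mkQ]
    · intro i j hij
      exact Submodule.map_mono (Submodule.comap_mono (hm hij))
    · intro i
      have hA : IsFredholm A := h0 ▸ (hC 0).1
      have hA' : ind A = 0 - (n : ℤ) := by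
        have := (hC 0).2
        rw [h0] at this
        simpa using this
      have h3 := ind_sub (hAC i) hA (hC i).1
      rw [(hC i).2, hA'] at h3
      refine (finrank_image (hCW i)).trans ?_
      omega
  · rintro C ⟨h0, hl, hm, -⟩ D ⟨h0', hl', hm', -⟩ hCD
    funext i
    have h1 := congrFun hCD i
    have hC := comap_map_image (A := A) (C := C i) (W := W)
      (h0 ▸ hm (Fin.zero_le i)) (hl ▸ hm (Fin.le_last i))
    have hD := comap_map_image (A := A) (C := D i) (W := W)
      (h0' ▸ hm' (Fin.zero_le i)) (hl' ▸ hm' (Fin.le_last i))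
    rw [← hC, ← hD]
    exact congrArg (fun U => Submodule.map W.subtype
      (Submodule.comap (A.comap W.subtype).mkQ U)) h1
  · rintro V ⟨h0, hl, hm, hV⟩
    have hfr : Module.finrank ℂ (W ⧸ A.comap W.subtype) = n := by
      have := hV (Fin.last n)
      rw [hl, finrank_top] at this
      simpa using this
    have hfin : FiniteDimensional ℂ (W ⧸ A.comap W.subtype) :=
      Module.finite_of_finrank_pos (by omega)
    have hA : IsFredholm A := hW.of_le hsub
    have hiA := ind_sub hsub hA hW
    rw [hind, hfr] at hiA
    let C : Fin (n + 1) → Submodule ℂ (LaurentSeries ℂ) := fun i =>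
      Submodule.map W.subtype (Submodule.comap (A.comap W.subtype).mkQ (V i))
    have hcc : ∀ i, (C i).comap W.subtype = Submodule.comap (A.comap W.subtype).mkQ (V i) :=
      fun i => Submodule.comap_map_eq_of_injective W.injective_subtype _
    have himg : ∀ i, Submodule.map (A.comap W.subtype).mkQ ((C i).comap W.subtype) = V i := by
      intro i
      rw [hcc]
      exact Submodule.map_comap_eq_of_surjective (Submodule.mkQ_surjective _) _
    have hCW : ∀ i, C i ≤ W := fun i => Submodule.map_subtype_le _ _
    have hCm : Monotone C := fun i j hij => Submodule.map_mono (Submodule.comap_mono (hm hij))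
    have hC0 : C 0 = A := by
      change Submodule.map W.subtype (Submodule.comap (A.comap W.subtype).mkQ (V 0)) = A
      rw [h0, Submodule.comap_bot, Submodule.ker_mkQ, Submodule.map_comap_subtype,
        inf_eq_right.2 hsub]
    have hCl : C (Fin.last n) = W := by
      change Submodule.map W.subtype (Submodule.comap (A.comap W.subtype).mkQ (V _)) = W
      rw [hl, Submodule.comap_top, Submodule.map_subtype_top]
    have hAC : ∀ i, A ≤ C i := fun i => hC0 ▸ hCm (Fin.zero_le i)
    refine ⟨C, ⟨hC0, hCl, hCm, ?_⟩, funext himg⟩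
    intro i
    have hq : FiniteDimensional ℂ (W ⧸ (C i).comap W.subtype) :=
      Module.Finite.of_surjective (Submodule.factor (Submodule.comap_mono (hAC i)))
        (Submodule.factor_surjective _)
    have hF : IsFredholm (C i) := hW.of_le (hCW i)
    refine ⟨hF, ?_⟩
    have h3 := ind_sub (hAC i) hA hF
    have h4 := finrank_image (A := A) (hCW i)
    rw [himg i, hV i] at h4
    rw [← h4] at h3
    omega

end
end
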